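/- Let H be a Hopf algebra over a field k with bijective antipode S, and suppose r ∈ H satisfies the 1-dimensional partial comodule equations. Set e := S⁻¹(r)·r. Then e ≠ 0, e² = e, and e·e_{(1)} ⊗ e_{(2)} = e ⊗ e = e_{(1)}·e ⊗ e_{(2)} in H ⊗ H; in particular e is a subcentral idempotent of H. -/

import Mathlib

open TensorProduct

/-- The five 1-dimensional partial comodule equations for an element `r` of a Hopf
algebra `H`: `ε(r) = 1`; `r ⊗ r·S(r) = r₍₁₎ ⊗ r₍₂₎·S(r)`; `r·S(r₍₁₎) ⊗ r₍₂₎ = r·S(r) ⊗ r`;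
`r ⊗ S(r)·r = r₍₁₎ ⊗ S(r₍₂₎)·r`; `S(r)·r ⊗ r = S(r)·r₍₁₎ ⊗ r₍₂₎`. -/
def OneDimPCM (k : Type*) {H : Type*} [Field k] [Ring H] [HopfAlgebra k H] (r : H) : Prop :=
  Coalgebra.counit (R := k) r = 1
  ∧ r ⊗ₜ[k] (r * HopfAlgebra.antipode (R := k) r)
      = Coalgebra.comul (R := k) r * ((1 : H) ⊗ₜ[k] HopfAlgebra.antipode (R := k) r)
  ∧ (r ⊗ₜ[k] (1 : H)) *
        (LinearMap.rTensor H (HopfAlgebra.antipode (R := k)) (Coalgebra.comul (R := k) r))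
      = (r * HopfAlgebra.antipode (R := k) r) ⊗ₜ[k] r
  ∧ r ⊗ₜ[k] (HopfAlgebra.antipode (R := k) r * r)
      = (LinearMap.lTensor H (HopfAlgebra.antipode (R := k)) (Coalgebra.comul (R := k) r))
          * ((1 : H) ⊗ₜ[k] r)
  ∧ (HopfAlgebra.antipode (R := k) r * r) ⊗ₜ[k] r
      = ((HopfAlgebra.antipode (R := k) r) ⊗ₜ[k] (1 : H)) * Coalgebra.comul (R := k) r

section Helpers
open Coalgebra HopfAlgebra WithConv

theorem aux_comul_antipode (k H : Type*) [Field k] [Ring H] [HopfAlgebra k H] :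
    (comul (R := k) : H →ₗ[k] H ⊗[k] H) ∘ₗ antipode k =
      TensorProduct.map (antipode k) (antipode k) ∘ₗ
        (TensorProduct.comm k H H).toLinearMap ∘ₗ comul := by
  let i1 : H →ₐ[k] H ⊗[k] H := Algebra.TensorProduct.includeLeft
  let i2 : H →ₐ[k] H ⊗[k] H := Algebra.TensorProduct.includeRight
  let S : H →ₗ[k] H := antipode k
  have hone : ∀ i : H →ₐ[k] H ⊗[k] H,
      toConv (i.toLinearMap ∘ₗ S) * toConv i.toLinearMap = 1 := by
    intro i
    have h := LinearMap.algHom_comp_convMul_distrib (R := k) i (toConv S) (toConv LinearMap.id)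
    rw [LinearMap.antipode_mul_id] at h
    apply WithConv.ofConv_injective
    refine Eq.trans h.symm ?_
    ext x
    simp [LinearMap.convOne_def]
  have hG : toConv (TensorProduct.map S S ∘ₗ
        (TensorProduct.comm k H H).toLinearMap ∘ₗ comul)
      = toConv (i2.toLinearMap ∘ₗ S) * toConv (i1.toLinearMap ∘ₗ S) := by
    ext x
    rw [(ℛ k x).convMul_apply]
    change TensorProduct.map S S (TensorProduct.comm k H H (comul x)) = _
    conv_lhs => rw [← (ℛ k x).eq]
    simp [i1, i2, map_sum]
  have hD : toConv (comul (R := k) : H →ₗ[k] H ⊗[k] H)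
      = toConv i1.toLinearMap * toConv i2.toLinearMap := by
    ext x
    rw [(ℛ k x).convMul_apply]
    change comul (R := k) x = _
    conv_lhs => rw [← (ℛ k x).eq]
    simp [i1, i2]
  apply WithConv.toConv_injective
  symm
  refine left_inv_eq_right_inv (a := toConv (comul (R := k) : H →ₗ[k] H ⊗[k] H)) ?_
    LinearMap.comul_right_inv
  change toConv (TensorProduct.map S S ∘ₗ
        (TensorProduct.comm k H H).toLinearMap ∘ₗ comul) * _ = 1
  rw [hG, hD, mul_assoc, ← mul_assoc (toConv (i1.toLinearMap ∘ₗ S)), hone, one_mul, hone]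

theorem aux_main (k H : Type*) [Field k] [Ring H] [HopfAlgebra k H]
    (hS : Function.Bijective (HopfAlgebra.antipode (R := k) (A := H)))
    (r : H) (hr : OneDimPCM k r)
    (r' : H) (hr' : HopfAlgebra.antipode (R := k) r' = r) :
    counit (R := k) (r' * r) = 1 ∧ r' * r * r' = r' ∧ r * r' * r = r
    ∧ (r ⊗ₜ[k] (1 : H)) * comul (R := k) r' = (r * r') ⊗ₜ r'
    ∧ ((1 : H) ⊗ₜ[k] r') * comul (R := k) r = r ⊗ₜ (r' * r)
    ∧ comul (R := k) r * (r' ⊗ₜ[k] (1 : H)) = (r * r') ⊗ₜ r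
    ∧ comul (R := k) r' * ((1 : H) ⊗ₜ[k] r) = r' ⊗ₜ (r' * r) := by
  obtain ⟨h1, h2, h3, h4, h5⟩ := hr
  let E := LinearEquiv.ofBijective (antipode k (A := H)) hS
  let T : H →ₗ[k] H := E.symm.toLinearMap
  have hST : ∀ x, antipode k (T x) = x := fun x => E.apply_symm_apply x
  have hTS : ∀ x, T (antipode k x) = x := fun x => E.symm_apply_apply x
  have hTm : ∀ x y, T (x * y) = T y * T x := by
    intro x y
    apply hS.1
    rw [antipode_mul_antidistrib, hST, hST, hST]
  have hTr : T r = r' := by rw [← hr', hTS]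
  have hD : comul (R := k) r' = TensorProduct.map T T (TensorProduct.comm k H H (comul r)) := by
    have h := LinearMap.congr_fun (aux_comul_antipode k H) r'
    simp only [LinearMap.comp_apply, hr', LinearEquiv.coe_coe] at h
    rw [h]
    have h' : ∀ z : H ⊗[k] H, z = TensorProduct.map T T (TensorProduct.comm k H H
        (TensorProduct.map (antipode k) (antipode k) (TensorProduct.comm k H H z))) := by
      intro z
      induction z with
      | zero => simp
      | add x y hx hy => rw [map_add, map_add, map_add, map_add, ← hx, ← hy]
      | tmul x y => simp [hTS]
    exact h' _
  have hm4 : r * antipode k r * r = r := by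
    have h := congrArg (LinearMap.mul' k H) h4
    have hs := sum_mul_antipode_eq_smul (ℛ k r)
    rw [h1, one_smul] at hs
    rw [← (ℛ k r).eq] at h
    simp only [map_sum, LinearMap.lTensor_tmul, Finset.sum_mul,
      Algebra.TensorProduct.tmul_mul_tmul, mul_one, LinearMap.mul'_apply, ← mul_assoc] at h
    rw [← Finset.sum_mul, hs, one_mul] at h
    exact h
  have hm2 : antipode k r * r * antipode k r = antipode k r := by
    have h := congrArg (fun z => LinearMap.mul' k H (LinearMap.rTensor H (antipode k) z)) h2
    have hs := sum_antipode_mul_eq_smul (ℛ k r)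
    rw [h1, one_smul] at hs
    rw [← (ℛ k r).eq] at h
    simp only [map_sum, LinearMap.rTensor_tmul, Finset.sum_mul,
      Algebra.TensorProduct.tmul_mul_tmul, mul_one, LinearMap.mul'_apply, ← mul_assoc] at h
    rw [← Finset.sum_mul, hs, one_mul] at h
    exact h
  refine ⟨?_, ?_, ?_, ?_, ?_, ?_, ?_⟩
  · rw [Bialgebra.counit_mul, h1, mul_one, ← counit_antipode, hr', h1]
  · have h := congrArg T hm4
    rw [hTm, hTm, hTS, hTr, ← mul_assoc] at h
    exact h
  · have h := congrArg T hm2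
    rw [hTm, hTm, hTS, hTr, ← mul_assoc] at h
    exact h
  · have h := congrArg (fun z => TensorProduct.comm k H H (TensorProduct.map T T z)) h2
    rw [hD]
    rw [← (ℛ k r).eq] at h ⊢
    simp only [map_sum, Finset.sum_mul, Finset.mul_sum, TensorProduct.map_tmul,
      Algebra.TensorProduct.tmul_mul_tmul, mul_one, one_mul, TensorProduct.comm_tmul,
      hTm, hTS, hTr] at h ⊢
    exact h.symm
  · have h := congrArg (fun z => LinearMap.lTensor H T z) h4
    rw [← (ℛ k r).eq] at h ⊢
    simp only [map_sum, Finset.sum_mul, Finset.mul_sum, LinearMap.lTensor_tmul,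
      Algebra.TensorProduct.tmul_mul_tmul, mul_one, one_mul,
      hTm, hTS, hTr] at h ⊢
    exact h.symm
  · have h := congrArg (fun z => LinearMap.rTensor H T z) h3
    rw [← (ℛ k r).eq] at h ⊢
    simp only [map_sum, Finset.sum_mul, Finset.mul_sum, LinearMap.rTensor_tmul,
      Algebra.TensorProduct.tmul_mul_tmul, mul_one, one_mul,
      hTm, hTS, hTr] at h ⊢
    exact h
  · have h := congrArg (fun z => TensorProduct.comm k H H (TensorProduct.map T T z)) h5
    rw [hD]
    rw [← (ℛ k r).eq] at h ⊢
    simp only [map_sum, Finset.sum_mul, Finset.mul_sum, TensorProduct.map_tmul,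
      Algebra.TensorProduct.tmul_mul_tmul, mul_one, one_mul, TensorProduct.comm_tmul,
      hTm, hTS, hTr] at h ⊢
    exact h.symm

end Helpers

/-- if `H` has bijective antipode and `r ∈ H` satisfies the 1-dimensional
partial comodule equations, then `e := S⁻¹(r)·r` is nonzero, idempotent and satisfies
`e·e₍₁₎ ⊗ e₍₂₎ = e ⊗ e = e₍₁₎·e ⊗ e₍₂₎`; in particular it is a subcentral idempotent. -/
theorem stmt12 (k H : Type*) [Field k] [Ring H] [HopfAlgebra k H]
    (hS : Function.Bijective (HopfAlgebra.antipode (R := k) (A := H)))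
    (r : H) (hr : OneDimPCM k r)
    (r' : H) (hr' : HopfAlgebra.antipode (R := k) r' = r)
    (e : H) (he : e = r' * r) :
    e ≠ 0
    ∧ e * e = e
    ∧ (e ⊗ₜ[k] (1 : H)) * Coalgebra.comul (R := k) e = e ⊗ₜ[k] e
    ∧ Coalgebra.comul (R := k) e * (e ⊗ₜ[k] (1 : H)) = e ⊗ₜ[k] e := by
  obtain ⟨h1, h2, h3, h4, h5, h6, h7⟩ := aux_main k H hS r hr r' hr'
  subst he
  refine ⟨?_, ?_, ?_, ?_⟩
  · intro h0
    rw [h0, map_zero] at h1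
    exact zero_ne_one h1
  · rw [← mul_assoc, h2]
  · have e1 : ((r' * r) ⊗ₜ[k] (1 : H)) = (r' ⊗ₜ[k] (1 : H)) * (r ⊗ₜ[k] (1 : H)) := by simp
    have e2 : (r' ⊗ₜ[k] (1 : H)) * ((r * r') ⊗ₜ[k] r')
        = (r' ⊗ₜ[k] (1 : H)) * ((1 : H) ⊗ₜ[k] r') := by
      simp [← mul_assoc, h2]
    rw [Bialgebra.comul_mul, e1, ← mul_assoc, mul_assoc (r' ⊗ₜ[k] (1 : H)), h4, e2, mul_assoc, h5]
    simp
  · have e1 : ((r' * r) ⊗ₜ[k] (1 : H)) = (r' ⊗ₜ[k] (1 : H)) * (r ⊗ₜ[k] (1 : H)) := by simp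
    have e2 : ((r * r') ⊗ₜ[k] r) * (r ⊗ₜ[k] (1 : H))
        = ((1 : H) ⊗ₜ[k] r) * (r ⊗ₜ[k] (1 : H)) := by
      simp [h3]
    rw [Bialgebra.comul_mul, e1, mul_assoc, ← mul_assoc (Coalgebra.comul r), h6, e2,
      ← mul_assoc, h7]
    simp
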